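/- (Group Strategyproofness) The mechanism that, given reported utility functions, selects the lowest competitive equilibrium is group strategyproof for buyers: there is no coalition S of buyers and no profile of misreported utility functions for S such that, at the lowest competitive equilibrium of the misreported market, every buyer in S obtains a strictly higher true payoff than at the lowest competitive equilibrium of the true market. -/

import Mathlib

attribute [local instance] Classical.propDecidable

/-- A unit-demand market: finite sets of buyers `I` and goods `J`, with utility
functions `u i j : ℝ → ℝ` that are continuous, strictly decreasing, surjective
(domain and range cover all of `ℝ`), and eventually non-positive. -/
structure Market (I J : Type) [Fintype I] [Fintype J] where
  u : I → J → ℝ → ℝ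
  cont : ∀ i j, Continuous (u i j)
  anti : ∀ i j, StrictAnti (u i j)
  surj : ∀ i j, Function.Surjective (u i j)
  evNonpos : ∀ i j, ∃ x : ℝ, ∀ y ≥ x, u i j y ≤ 0

/-- A competitive equilibrium: nonnegative prices `p`, nonnegative payoffs `w`,
and a partial matching `μ` (injective on matched buyers) such that every buyer
receives a most preferred good at the prices, unmatched buyers have payoff `0`,
and unmatched goods have price `0`. -/
def IsEquilib {I J : Type} [Fintype I] [Fintype J] (M : Market I J)
    (p : J → ℝ) (w : I → ℝ) (μ : I → Option J) : Prop :=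
  (∀ i i' j, μ i = some j → μ i' = some j → i = i') ∧
  (∀ j, 0 ≤ p j) ∧ (∀ i, 0 ≤ w i) ∧
  (∀ i j, μ i = some j → w i = M.u i j (p j)) ∧
  (∀ i j, M.u i j (p j) ≤ w i) ∧
  (∀ i, μ i = none → w i = 0) ∧
  (∀ j, (∀ i, μ i ≠ some j) → p j = 0)

/-- `W` is the lowest competitive equilibrium: its prices are componentwise
below those of every competitive equilibrium. -/
def IsLowest {I J : Type} [Fintype I] [Fintype J] (M : Market I J)
    (p : J → ℝ) (w : I → ℝ) (μ : I → Option J) : Prop :=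
  IsEquilib M p w μ ∧ ∀ p' w' μ', IsEquilib M p' w' μ' → ∀ j, p j ≤ p' j

/-- `W` is the highest competitive equilibrium: its prices are componentwise
above those of every competitive equilibrium. -/
def IsHighest {I J : Type} [Fintype I] [Fintype J] (M : Market I J)
    (p : J → ℝ) (w : I → ℝ) (μ : I → Option J) : Prop :=
  IsEquilib M p w μ ∧ ∀ p' w' μ', IsEquilib M p' w' μ' → ∀ j, p' j ≤ p j

/-- Induced payoff `u_i(p) = max({u_i^j(p^j) : j} ∪ {0})`. -/
noncomputable def inducedPayoff {I J : Type} [Fintype I] [Fintype J] (M : Market I J)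
    (p : J → ℝ) (i : I) : ℝ :=
  (insert (0:ℝ) (Finset.univ.image fun j => M.u i j (p j))).max' (Finset.insert_nonempty _ _)

/-- Induced price `p^j(u) = max({p_i^j(u_i) : i} ∪ {0})`, where `p_i^j` is the
inverse of `u_i^j`. -/
noncomputable def inducedPrice {I J : Type} [Fintype I] [Fintype J] (M : Market I J)
    (w : I → ℝ) (j : J) : ℝ :=
  (insert (0:ℝ) (Finset.univ.image fun i => Function.invFun (M.u i j) (w i))).max' (Finset.insert_nonempty _ _)

/-- An equilibrium up to the bidding increment `ε`, where buyer `i` has an outside option of value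
`o i`: no buyer gains by outbidding the current price of a good by `ε`. -/
structure IsApproxEquilib {I J : Type} [Fintype I] [Fintype J] (M : Market I J)
    (o : I → ℝ) (ε : ℝ) (q : J → ℝ) (ν : I → Option J) : Prop where
  inj : ∀ i i' j, ν i = some j → ν i' = some j → i = i'
  nonneg : ∀ j, 0 ≤ q j
  rational : ∀ i j, ν i = some j → o i ≤ M.u i j (q j)
  envyFree : ∀ i j k, ν i = some j → M.u i k (q k + ε) ≤ M.u i j (q j)
  unmatched : ∀ i j, ν i = none → M.u i j (q j + ε) ≤ o i
  price_zero : ∀ j, (∀ i, ν i ≠ some j) → q j = 0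

section Matching

variable {I J : Type} [Fintype I]

/-- The buyers matched by `ν` to a good in `C`. -/
noncomputable def buyersOf (ν : I → Option J) (C : Finset J) : Finset I :=
  Finset.univ.filter fun i => ∃ j ∈ C, ν i = some j

theorem mem_buyersOf {ν : I → Option J} {C : Finset J} {i : I} :
    i ∈ buyersOf ν C ↔ ∃ j ∈ C, ν i = some j := by
  simp [buyersOf]

theorem card_buyersOf_le {ν : I → Option J} (C : Finset J)
    (hinj : ∀ i i' j, ν i = some j → ν i' = some j → i = i') :
    (buyersOf ν C).card ≤ C.card := by
  have h : ∀ i ∈ buyersOf ν C, ν i ∈ C.map Function.Embedding.some := by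
    intro i hi
    obtain ⟨j, hj, e⟩ := mem_buyersOf.1 hi
    simp [e, hj]
  rw [← Finset.card_map (s := C) Function.Embedding.some]
  refine Finset.card_le_card_of_injOn ν h ?_
  intro a ha b _ hab
  obtain ⟨j, -, e⟩ := mem_buyersOf.1 ha
  exact hinj a b j e (hab ▸ e)

theorem card_le_card_buyersOf {ν : I → Option J} {C : Finset J}
    (hC : ∀ j ∈ C, ∃ i, ν i = some j) : C.card ≤ (buyersOf ν C).card := by
  rw [← Finset.card_map Function.Embedding.some]
  refine (Finset.card_le_card ?_).trans (Finset.card_image_le (s := buyersOf ν C) (f := ν))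
  intro x hx
  obtain ⟨j, hj, rfl⟩ := Finset.mem_map.1 hx
  obtain ⟨i, hi⟩ := hC j hj
  exact Finset.mem_image.2 ⟨i, mem_buyersOf.2 ⟨j, hj, hi⟩, hi⟩

end Matching

section Existence

variable {I J : Type} [Fintype I] [Fintype J]

/-- Prices at which every utility is non-positive from some level on are uniformly bounded. -/
theorem Market.exists_price_bound (M : Market I J) :
    ∃ K : ℝ, 0 ≤ K ∧ ∀ i j x, 0 ≤ M.u i j x → x ≤ K := by
  choose f hf using M.evNonpos
  obtain ⟨K, hK⟩ := (Set.finite_range fun a : I × J => f a.1 a.2).bddAbove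
  refine ⟨max K 0, le_max_right _ _, fun i j x hx => ?_⟩
  have h1 : M.u i j (f i j) ≤ M.u i j x := (hf i j _ le_rfl).trans hx
  exact ((M.anti i j).le_iff_ge.1 h1).trans ((hK ⟨(i, j), rfl⟩).trans (le_max_left _ _))

/-- An ascending auction with increment `ε` terminates in an approximate equilibrium. -/
theorem exists_isApproxEquilib (M : Market I J) (o : I → ℝ) (ho : ∀ i, 0 ≤ o i) {ε : ℝ}
    (hε : 0 < ε) : ∃ q ν, IsApproxEquilib M o ε q ν := by
  by_contra hno
  obtain ⟨K, hK0, hK⟩ := M.exists_price_bound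
  have key : ∀ s : ℕ, ∃ (n : J → ℕ) (ν : I → Option J), ∑ j, n j = s ∧
      (∀ i i' j, ν i = some j → ν i' = some j → i = i') ∧
      (∀ i j, ν i = some j → o i ≤ M.u i j (ε * n j)) ∧
      (∀ i j k, ν i = some j → M.u i k (ε * n k + ε) ≤ M.u i j (ε * n j)) ∧
      (∀ j, (∀ i, ν i ≠ some j) → n j = 0) := by
    intro s
    induction s with
    | zero => exact ⟨fun _ => 0, fun _ => none, by simp, by simp, by simp, by simp, by simp⟩
    | succ s ih =>
      obtain ⟨n, ν, hs, h1, h2, h3, h4⟩ := ih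
      have hbid : ∃ i j, ν i = none ∧ o i < M.u i j (ε * n j + ε) := by
        by_contra! hc
        exact hno ⟨fun j => ε * n j, ν, h1, fun j => by positivity, h2, h3,
          fun i j hi => hc i j hi, fun j hj => by simp [h4 j hj]⟩
      obtain ⟨i, j₀, hi, hj₀⟩ := hbid
      have : Nonempty J := ⟨j₀⟩
      obtain ⟨j, hj⟩ := Finite.exists_max fun j => M.u i j (ε * n j + ε)
      have hij := hj₀.trans_le (hj j₀)
      have hnj : ε * ((Function.update n j (n j + 1) j : ℕ) : ℝ) = ε * n j + ε := by
        simp; ring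
      have hne : ∀ k, k ≠ j → Function.update n j (n j + 1) k = n k := fun k hk => by simp [hk]
      have hle : ∀ k, ε * (n k : ℝ) ≤ ε * ((Function.update n j (n j + 1) k : ℕ) : ℝ) := by
        intro k
        by_cases hk : k = j
        · subst hk; rw [hnj]; linarith
        · rw [hne k hk]
      have hold : ∀ i' k, i' ≠ i →
          (if i' = i then some j else if ν i' = some j then none else ν i') = some k →
          ν i' = some k ∧ k ≠ j := by
        intro i' k hi' h
        rw [if_neg hi'] at h
        split_ifs at h with h'
        exact ⟨h, fun e => h' (e ▸ h)⟩
      have hnew : ∀ k, (if i = i then some j else if ν i = some j then none else ν i) = some k →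
          k = j := by
        intro k h
        simpa using h.symm
      refine ⟨Function.update n j (n j + 1),
        fun i' => if i' = i then some j else if ν i' = some j then none else ν i',
        ?_, ?_, ?_, ?_, ?_⟩
      · rw [Finset.sum_update_of_mem (Finset.mem_univ j), ← hs,
          ← Finset.add_sum_erase _ n (Finset.mem_univ j), Finset.sdiff_singleton_eq_erase]
        ring
      · intro a b k ha hb
        by_cases hai : a = i <;> by_cases hbi : b = i
        · rw [hai, hbi]
        · subst hai
          exact absurd (hnew k ha) (hold b k hbi hb).2
        · subst hbi
          exact absurd (hnew k hb) (hold a k hai ha).2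
        · exact h1 a b k (hold a k hai ha).1 (hold b k hbi hb).1
      · intro a k ha
        by_cases hai : a = i
        · subst hai
          obtain rfl := hnew k ha
          rw [hnj]; exact hij.le
        · obtain ⟨ha', hk⟩ := hold a k hai ha
          rw [hne k hk]; exact h2 a k ha'
      · intro a k l ha
        refine ((M.anti a l).antitone (add_le_add_left (hle l) ε)).trans ?_
        by_cases hai : a = i
        · subst hai
          obtain rfl := hnew k ha
          rw [hnj]; exact hj l
        · obtain ⟨ha', hk⟩ := hold a k hai ha
          rw [hne k hk]; exact h3 a k l ha'
      · intro k hk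
        have hkj : k ≠ j := fun e => hk i (by simp [e])
        rw [hne k hkj]
        refine h4 k fun a ha => ?_
        have hai : a ≠ i := fun e => by simp [← e, ha] at hi
        exact hk a (by simp [hai, ha, hkj])
  obtain ⟨n, ν, hs, -, h2, -, h4⟩ := key (Fintype.card J * ⌈K / ε⌉₊ + 1)
  have hn : ∀ j, n j ≤ ⌈K / ε⌉₊ := by
    intro j
    by_cases h : ∀ i, ν i ≠ some j
    · simp [h4 j h]
    · push Not at h
      obtain ⟨i, hi⟩ := h
      have hx := hK i j _ ((ho i).trans (h2 i j hi))
      have : (n j : ℝ) ≤ K / ε := by rw [le_div_iff₀ hε]; linarith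
      exact_mod_cast this.trans (Nat.le_ceil _)
  have := Finset.sum_le_card_nsmul Finset.univ n _ fun j _ => hn j
  rw [Finset.card_univ, smul_eq_mul, hs] at this
  omega

/-- Approximate equilibria with vanishing increments and convergent outside options accumulate at
an exact one, sharing its matching with some term of the sequence. -/
theorem exists_limit_isApproxEquilib (M : Market I J) {o : ℕ → I → ℝ} {o' : I → ℝ} {ε : ℕ → ℝ}
    {q : ℕ → J → ℝ} {ν : ℕ → I → Option J}
    (h : ∀ m, IsApproxEquilib M (o m) (ε m) (q m) (ν m)) (ho : ∀ m i, 0 ≤ o m i)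
    (hlim : Filter.Tendsto o Filter.atTop (nhds o'))
    (hε : Filter.Tendsto ε Filter.atTop (nhds 0)) :
    ∃ q' m, IsApproxEquilib M o' 0 q' (ν m) := by
  obtain ⟨K, hK0, hK⟩ := M.exists_price_bound
  have hq : ∀ m, q m ∈ Set.Icc (fun _ : J => (0 : ℝ)) fun _ => K := by
    refine fun m => ⟨(h m).nonneg, fun j => ?_⟩
    by_cases hj : ∀ i, ν m i ≠ some j
    · simpa [(h m).price_zero j hj] using hK0
    · push Not at hj
      obtain ⟨i, hi⟩ := hj
      exact hK i j _ ((ho m i).trans ((h m).rational i j hi))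
  obtain ⟨q', -, φ, hφ, hqφ⟩ := isCompact_Icc.tendsto_subseq hq
  obtain ⟨ν', hν'⟩ := Finite.exists_infinite_fiber fun m => ν (φ m)
  have hfreq : ∃ᶠ m in Filter.atTop, ν (φ m) = ν' :=
    Nat.frequently_atTop_iff_infinite.2 (Set.infinite_coe_iff.1 hν')
  obtain ⟨ψ, hψ, hνψ⟩ := Filter.extraction_of_frequently_atTop hfreq
  have hsub : Filter.Tendsto (fun m => φ (ψ m)) Filter.atTop Filter.atTop :=
    hφ.tendsto_atTop.comp hψ.tendsto_atTop
  have hqj : ∀ j, Filter.Tendsto (fun m => q (φ (ψ m)) j) Filter.atTop (nhds (q' j)) := fun j =>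
    (tendsto_pi_nhds.1 (hqφ.comp hψ.tendsto_atTop)) j
  have hoi : ∀ i, Filter.Tendsto (fun m => o (φ (ψ m)) i) Filter.atTop (nhds (o' i)) := fun i =>
    tendsto_pi_nhds.1 (hlim.comp hsub) i
  have hu : ∀ i j, Filter.Tendsto (fun m => M.u i j (q (φ (ψ m)) j)) Filter.atTop
      (nhds (M.u i j (q' j))) := fun i j => ((M.cont i j).tendsto _).comp (hqj j)
  have hue : ∀ i j, Filter.Tendsto (fun m => M.u i j (q (φ (ψ m)) j + ε (φ (ψ m)))) Filter.atTop
      (nhds (M.u i j (q' j + 0))) := fun i j =>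
    ((M.cont i j).tendsto _).comp ((hqj j).add (hε.comp hsub))
  have hm : ∀ m, IsApproxEquilib M (o (φ (ψ m))) (ε (φ (ψ m))) (q (φ (ψ m))) ν' := fun m =>
    hνψ m ▸ h (φ (ψ m))
  refine ⟨q', φ (ψ 0), ?_⟩
  rw [hνψ 0]
  exact
    { inj := (hm 0).inj
      nonneg := fun j => ge_of_tendsto' (hqj j) fun m => (hm m).nonneg j
      rational := fun i j hij => le_of_tendsto_of_tendsto' (hoi i) (hu i j) fun m =>
        (hm m).rational i j hij
      envyFree := fun i j k hij => le_of_tendsto_of_tendsto' (hue i k) (hu i j) fun m =>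
        (hm m).envyFree i j k hij
      unmatched := fun i j hi => le_of_tendsto_of_tendsto' (hue i j) (hoi i) fun m =>
        (hm m).unmatched i j hi
      price_zero := fun j hj => tendsto_nhds_unique (hqj j)
        (tendsto_const_nhds.congr fun m => ((hm m).price_zero j hj).symm) }

theorem exists_isApproxEquilib_zero (M : Market I J) (o : I → ℝ) (ho : ∀ i, 0 ≤ o i) :
    ∃ q ν, IsApproxEquilib M o 0 q ν := by
  choose q ν h using fun m : ℕ =>
    exists_isApproxEquilib M o ho (Nat.one_div_pos_of_nat (α := ℝ) (n := m))
  obtain ⟨q', m, h'⟩ := exists_limit_isApproxEquilib M h (fun _ => ho) tendsto_const_nhds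
    tendsto_one_div_add_atTop_nhds_zero_nat
  exact ⟨q', ν m, h'⟩

/-- If buyers with a positive outside option are all matched, the outside options play no role. -/
theorem IsApproxEquilib.isEquilib {M : Market I J} {o : I → ℝ} {q : J → ℝ} {ν : I → Option J}
    (h : IsApproxEquilib M o 0 q ν) (ho : ∀ i, 0 ≤ o i) (hz : ∀ i, ν i = none → o i = 0) :
    IsEquilib M q (fun i => (ν i).elim 0 fun j => M.u i j (q j)) ν := by
  refine ⟨h.inj, h.nonneg, fun i => ?_, fun i j hij => by simp [hij], fun i j => ?_,
    fun i hi => by simp [hi], h.price_zero⟩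
  · cases hi : ν i with
    | none => simp [hi]
    | some j => simpa [hi] using (ho i).trans (h.rational i j hi)
  · cases hi : ν i with
    | none => simpa [hi, hz i hi] using h.unmatched i j hi
    | some k => simpa [hi] using h.envyFree i k j hi

/-- At the lowest equilibrium each buyer `i` pays no less than the externality imposed on others:
the market has an equilibrium without `i` at whose prices `i` obtains at most `w i`. -/
theorem IsLowest.exists_equilib_without {M : Market I J} {p : J → ℝ} {w : I → ℝ}
    {μ : I → Option J} (hlow : IsLowest M p w μ) (i : I) :
    ∃ q ν, IsApproxEquilib M (Function.update 0 i (w i)) 0 q ν ∧ ν i = none := by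
  obtain ⟨⟨-, -, hw, -, hopt, -, -⟩, hmin⟩ := hlow
  have hpos : ∀ x, 0 ≤ x → ∀ a, 0 ≤ Function.update (0 : I → ℝ) i x a := by
    intro x hx a
    by_cases ha : a = i
    · subst ha; simpa using hx
    · simp [ha]
  have hδ : ∀ m : ℕ, 0 < 1 / ((m : ℝ) + 1) := fun m => Nat.one_div_pos_of_nat
  have hnn : ∀ m : ℕ, 0 ≤ w i + 1 / ((m : ℝ) + 1) := fun m => add_nonneg (hw i) (hδ m).le
  choose q ν h using fun m : ℕ => exists_isApproxEquilib_zero M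
    (Function.update 0 i (w i + 1 / ((m : ℝ) + 1))) (hpos _ (hnn m))
  have hnone : ∀ m, ν m i = none := by
    intro m
    by_contra hne
    obtain ⟨j, hj⟩ := Option.ne_none_iff_exists'.1 hne
    have heq := (h m).isEquilib (hpos _ (hnn m)) fun a ha => by
      have : a ≠ i := fun e => hne (e ▸ ha)
      simp [this]
    have h1 := (M.anti i j).antitone (hmin _ _ _ heq j)
    have h2 := (h m).rational i j hj
    rw [Function.update_self] at h2
    linarith [hδ m, hopt i j]
  have hlim : Filter.Tendsto
      (fun m : ℕ => Function.update (0 : I → ℝ) i (w i + 1 / ((m : ℝ) + 1)))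
      Filter.atTop (nhds (Function.update 0 i (w i))) := by
    refine tendsto_const_nhds.update i ?_
    simpa using (tendsto_one_div_add_atTop_nhds_zero_nat (𝕜 := ℝ)).const_add (w i)
  obtain ⟨q', m, h'⟩ := exists_limit_isApproxEquilib M h (fun m => hpos _ (hnn m)) hlim
    tendsto_const_nhds
  exact ⟨q', ν m, h', hnone m⟩

/-- If outside options are worth at most the equilibrium payoffs, the goods that are cheaper
than in the equilibrium are sold to the same buyers as in the equilibrium. -/
theorem IsEquilib.buyersOf_cheaper {M : Market I J} {p : J → ℝ} {w : I → ℝ}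
    {μ : I → Option J} (hE : IsEquilib M p w μ) {o : I → ℝ} {q : J → ℝ} {ν : I → Option J}
    (h : IsApproxEquilib M o 0 q ν) (ho : ∀ i, o i ≤ w i) :
    buyersOf μ (Finset.univ.filter fun j => q j < p j) =
      buyersOf ν (Finset.univ.filter fun j => q j < p j) := by
  obtain ⟨-, -, -, hpay, hopt, -, hzero⟩ := hE
  set B := Finset.univ.filter fun j => q j < p j with hB
  have hmatched : ∀ j ∈ B, ∃ i, μ i = some j := by
    intro j hj
    have hlt : q j < p j := (Finset.mem_filter.1 hj).2
    by_contra! hc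
    linarith [hzero j hc, h.nonneg j]
  refine Finset.eq_of_subset_of_card_le (fun i hi => ?_)
    ((card_buyersOf_le B h.inj).trans (card_le_card_buyersOf hmatched))
  obtain ⟨j, hj, hij⟩ := mem_buyersOf.1 hi
  have hgain : w i < M.u i j (q j) := by
    rw [hpay i j hij]
    exact M.anti i j (Finset.mem_filter.1 hj).2
  cases hi' : ν i with
  | none =>
    have := h.unmatched i j hi'
    rw [add_zero] at this
    linarith [ho i]
  | some l =>
    have := h.envyFree i l j hi'
    rw [add_zero] at this
    refine mem_buyersOf.2 ⟨l, ?_, hi'⟩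
    simp only [hB, Finset.mem_filter, Finset.mem_univ, true_and]
    exact (M.anti i l).lt_iff_gt.1 (by linarith [hopt i l])

end Existence

/-- Group strategyproofness of the lowest-competitive-equilibrium mechanism:
no coalition `S` of buyers can misreport utilities (yielding a market `Mh`
agreeing with the true market `M` outside `S`) so that every member of `S`
obtains a strictly higher true payoff at the lowest equilibrium of the
misreported market. -/
theorem group_strategyproof {I J : Type} [Fintype I] [Fintype J]
    (M Mh : Market I J) (S : Finset I)
    (hagree : ∀ i ∉ S, M.u i = Mh.u i) (hS : S.Nonempty)
    (p : J → ℝ) (w : I → ℝ) (μ : I → Option J) (hlow : IsLowest M p w μ)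
    (ph : J → ℝ) (wh : I → ℝ) (μh : I → Option J) (hlowh : IsLowest Mh ph wh μh) :
    ¬ ∀ i ∈ S, w i < (μh i).elim 0 (fun j => M.u i j (ph j)) := by
  intro hgain
  obtain ⟨i₀, hi₀⟩ := hS
  obtain ⟨q, ν, hν, hnone⟩ := hlow.exists_equilib_without i₀
  have hXY := hlow.1.buyersOf_cheaper hν fun i => by
    by_cases hi : i = i₀
    · subst hi; simp
    · simpa [hi] using hlow.1.2.2.1 i
  obtain ⟨⟨-, -, hw, hpay, hopt, -, hzero⟩, -⟩ := hlow
  obtain ⟨⟨hinjh, hphnn, -, hpayh, hopth, hnoneh, -⟩, -⟩ := hlowh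
  set B := Finset.univ.filter fun j => q j < p j with hB
  have hmemB : ∀ j, j ∈ B ↔ q j < p j := by simp [hB]
  set C := Finset.univ.filter fun j => ph j < max (p j) (q j) with hC
  have hmemC : ∀ j, j ∈ C ↔ ph j < max (p j) (q j) := by simp [hC]
  have hνnn : ∀ i j, ν i = some j → 0 ≤ M.u i j (q j) := by
    intro i j hij
    refine le_trans ?_ (hν.rational i j hij)
    by_cases hi : i = i₀
    · subst hi; simp [hw i]
    · simp [hi]
  let ν' : I → Option J := fun i => if i ∈ buyersOf μ B then μ i else ν i
  have hmatched : ∀ j ∈ C, ∃ i, ν' i = some j := by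
    intro j hj
    rw [hmemC] at hj
    by_cases hjB : j ∈ B
    · have hlt := (hmemB j).1 hjB
      obtain ⟨i, hi⟩ : ∃ i, μ i = some j := by
        by_contra! hc
        linarith [hzero j hc, hν.nonneg j]
      exact ⟨i, by simp only [ν']; rw [if_pos (mem_buyersOf.2 ⟨j, hjB, hi⟩), hi]⟩
    · rw [max_eq_right (not_lt.1 (mt (hmemB j).2 hjB))] at hj
      obtain ⟨i, hi⟩ : ∃ i, ν i = some j := by
        by_contra! hc
        linarith [hν.price_zero j hc, hphnn j]
      refine ⟨i, ?_⟩
      have : i ∉ buyersOf μ B := by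
        rw [hXY]
        intro hc
        obtain ⟨k, hk, hik⟩ := mem_buyersOf.1 hc
        rw [hi, Option.some_inj] at hik
        exact hjB (hik ▸ hk)
      simp only [ν']
      rw [if_neg this, hi]
  have hi₀Z : i₀ ∉ buyersOf ν' C := by
    have : i₀ ∉ buyersOf μ B := by
      rw [hXY]; simp [mem_buyersOf, hnone]
    rw [mem_buyersOf]
    simp only [ν']
    rw [if_neg this, hnone]
    simp
  have hcoalition : ∀ i ∈ S, i ∈ buyersOf μh C := by
    intro i hi
    have hg := hgain i hi
    cases hl : μh i with
    | none => simp only [hl, Option.elim] at hg; linarith [hw i]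
    | some l =>
      simp only [hl, Option.elim] at hg
      refine mem_buyersOf.2 ⟨l, (hmemC l).2 (lt_max_of_lt_left ?_), hl⟩
      exact (M.anti i l).lt_iff_gt.1 ((hopt i l).trans_lt hg)
  have hpref : ∀ i j, ν' i = some j → 0 ≤ M.u i j (max (p j) (q j)) ∧
      ∀ l, M.u i l (max (p l) (q l)) ≤ M.u i j (max (p j) (q j)) := by
    intro i j hij
    simp only [ν'] at hij
    split_ifs at hij with hi
    · obtain ⟨k, hk, hik⟩ := mem_buyersOf.1 hi
      rw [hij, Option.some_inj] at hik
      subst hik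
      rw [max_eq_left ((hmemB j).1 hk).le, ← hpay i j hij]
      exact ⟨hw i, fun l => ((M.anti i l).antitone (le_max_left _ _)).trans (hopt i l)⟩
    · have hj : j ∉ B := fun hj => hi (hXY ▸ mem_buyersOf.2 ⟨j, hj, hij⟩)
      rw [max_eq_right (not_lt.1 (mt (hmemB j).2 hj))]
      refine ⟨hνnn i j hij, fun l => ((M.anti i l).antitone (le_max_right _ _)).trans ?_⟩
      simpa using hν.envyFree i j l hij
  have hsub : insert i₀ (buyersOf ν' C) ⊆ buyersOf μh C := by
    refine Finset.insert_subset (hcoalition i₀ hi₀) fun i hi => ?_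
    by_cases hiS : i ∈ S
    · exact hcoalition i hiS
    obtain ⟨j, hj, hij⟩ := mem_buyersOf.1 hi
    obtain ⟨hnn, hbest⟩ := hpref i j hij
    have hlt := M.anti i j ((hmemC j).1 hj)
    have hle := hopth i j
    rw [← hagree i hiS] at hle
    cases hl : μh i with
    | none => linarith [hnoneh i hl]
    | some l =>
      have hval := hpayh i l hl
      rw [← hagree i hiS] at hval
      refine mem_buyersOf.2 ⟨l, (hmemC l).2 ?_, hl⟩
      exact (M.anti i l).lt_iff_gt.1 (by linarith [hbest l])
  have hcard := Finset.card_le_card hsub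
  rw [Finset.card_insert_of_notMem hi₀Z] at hcard
  have := card_le_card_buyersOf hmatched
  have := card_buyersOf_le C hinjh
  omega
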